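/- Suppose α has an adjusted nearest integer expansion and let d_n^± be the quantities associated to γ_*. If it is not the case that a_{i+1} = 2 with ε_{i+1} = +1, then for both choices of sign σ ∈ {+1, −1}: (1/4)·(1 + ᾱ_i − σ·d_i^−)·(1 − ε_{i+1}α_i + σ·d_i^+)/(1 + ε_{i+1}ᾱ_i α_i) ≥ 2057/51728 (= 1/25.147…). -/

import Mathlib

open Filter Finset

attribute [local instance] Classical.propDecidable

/-- Distance from `x` to the nearest integer, `‖x‖`. -/
noncomputable def nint (x : ℝ) : ℝ := |x - round x|

/-- The two-sided inhomogeneous approximation constant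
`M(α,γ) = liminf_{|n|→∞} |n|·‖nα-γ‖`. -/
noncomputable def Mval (α γ : ℝ) : ℝ :=
  Filter.liminf (fun n : ℤ => (|n| : ℝ) * nint (n * α - γ)) Filter.cofinite

/-- Denominators `q_i` of a semi-regular continued fraction with partial quotients `a`
and signs `e`: `q_0 = 1`, `q_1 = a_1`, `q_i = a_i q_{i-1} + ε_i q_{i-2}`. -/
noncomputable def qs (a e : ℕ → ℤ) : ℕ → ℤ
  | 0 => 1
  | 1 => a 1
  | i + 2 => a (i + 2) * qs a e (i + 1) + e (i + 2) * qs a e i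

/-- Reversed tails `ᾱ_i = q_{i-1}/q_i` (with `ᾱ_0 = 0`). -/
noncomputable def ab (a e : ℕ → ℤ) (i : ℕ) : ℝ :=
  if i = 0 then 0 else (qs a e (i - 1) : ℝ) / (qs a e i : ℝ)

/-- An adjusted nearest integer expansion of `α`: a semi-regular continued fraction
`α = 1/(a_1 + ε_2/(a_2 + ε_3/(a_3 + ⋯)))` with tails `t i = α_i`, satisfying the
conditions (i)-(iv) of an adjusted expansion. -/
structure ANIE (α : ℝ) where
  /-- partial quotients `a_i` (for `i ≥ 1`) -/
  a : ℕ → ℤ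
  /-- signs `ε_i` -/
  e : ℕ → ℤ
  /-- tails: `t i = α_i`, `t 0 = α` -/
  t : ℕ → ℝ
  ha : ∀ i, 1 ≤ i → 2 ≤ a i
  he : ∀ i, e i = 1 ∨ e i = -1
  he1 : e 1 = 1
  ht0 : t 0 = α
  htpos : ∀ i, 0 < t i
  htlt1 : ∀ i, t i < 1
  hrec : ∀ i, t i = 1 / ((a (i + 1) : ℝ) + (e (i + 2) : ℝ) * t (i + 1))
  /-- condition (i): `a_i = 2` implies `ε_i = +1` or `ε_{i+1} = +1` -/
  hcond1 : ∀ i, 1 ≤ i → a i = 2 → e i = 1 ∨ e (i + 1) = 1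
  /-- condition (ii): if `a_i = 2`, `ε_i = -1` then `1/ᾱ_{i-1} - 1/α_i ≥ 1` -/
  hcond2 : ∀ i, 1 ≤ i → a i = 2 → e i = -1 → 1 / ab a e (i - 1) - 1 / t i ≥ 1
  /-- condition (iii): if `a_i = 2`, `ε_{i+1} = -1` then `1/α_i - 1/ᾱ_{i-1} > 1` -/
  hcond3 : ∀ i, 1 ≤ i → a i = 2 → e (i + 1) = -1 → 1 / t i - 1 / ab a e (i - 1) > 1
  /-- condition (iv): no block `2, (-3,)^k, -2` in the sequence `(ε_i a_i)` -/
  hcond4 : ∀ i k, 1 ≤ i →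
    ¬(e i * a i = 2 ∧ (∀ j, j < k → e (i + 1 + j) * a (i + 1 + j) = -3) ∧
        e (i + 1 + k) * a (i + 1 + k) = -2)

namespace ANIE

variable {α : ℝ}

/-- `D n = D_{n-1} = α_0 α_1 ⋯ α_{n-1}` (so `D 0 = 1`, `D 1 = α`). -/
noncomputable def D (E : ANIE α) (n : ℕ) : ℝ := ∏ j ∈ Finset.range n, E.t j

/-- The number of indices `1 ≤ k ≤ i` with `a_k` odd. -/
noncomputable def oddIdx (E : ANIE α) (i : ℕ) : ℕ :=
  ((Finset.Icc 1 i).filter fun k => Odd (E.a k)).card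

/-- `λ_i`: zero if `a_i` is even, `(-1)^j` if `a_i = a_{n_j}` is the `j`-th odd partial
quotient. -/
noncomputable def lam (E : ANIE α) (i : ℕ) : ℤ :=
  if Odd (E.a i) then (-1) ^ E.oddIdx i else 0

/-- `γ_* = Σ_{i≥1} (a_i - 1 + ε_i + λ_i)/2 · D_{i-1}`. -/
noncomputable def gammaStar (E : ANIE α) : ℝ :=
  ∑' k : ℕ,
    (((E.a (k + 1) : ℝ) - 1 + (E.e (k + 1) : ℝ) + (E.lam (k + 1) : ℝ)) / 2) * E.D (k + 1)

/-- `ᾱ_i = q_{i-1}/q_i`. -/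
noncomputable def abar (E : ANIE α) (i : ℕ) : ℝ := ab E.a E.e i

/-- `δ_i = -(-ε_1)(-ε_2)⋯(-ε_{i+1})`. -/
noncomputable def delta (E : ANIE α) (i : ℕ) : ℤ := -∏ j ∈ Finset.Icc 1 (i + 1), (-E.e j)

/-- `d_n^- = (Σ_{i=1}^n t_i δ_{i-1} q_{i-1}) / (δ_{n-1} q_n)` for `γ_*` (`t_i = λ_i`). -/
noncomputable def dminus (E : ANIE α) (n : ℕ) : ℝ :=
  (∑ i ∈ Finset.Icc 1 n, (E.lam i : ℝ) * (E.delta (i - 1) : ℝ) * (qs E.a E.e (i - 1) : ℝ)) /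
    ((E.delta (n - 1) : ℝ) * (qs E.a E.e n : ℝ))

/-- `d_n^+ = (Σ_{i=n+1}^∞ t_i D_{i-1}) / D_{n-1}` for `γ_*` (`t_i = λ_i`). -/
noncomputable def dplus (E : ANIE α) (n : ℕ) : ℝ :=
  (∑' k : ℕ, (E.lam (n + 1 + k) : ℝ) * E.D (n + 1 + k)) / E.D n

/-- `i ∈ S(γ_*)`: `|d_i^-| ≤ 1 - ᾱ_i` and `-(1-ε_{i+1}α_i) ≤ d_i^+ ≤ 1+ε_{i+1}α_i`. -/
def inS (E : ANIE α) (i : ℕ) : Prop :=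
  |E.dminus i| ≤ 1 - E.abar i ∧
    -(1 - (E.e (i + 1) : ℝ) * E.t i) ≤ E.dplus i ∧
      E.dplus i ≤ 1 + (E.e (i + 1) : ℝ) * E.t i

end ANIE

namespace ANIE

variable {α : ℝ}

lemma qs_pos_mono (E : ANIE α) (n : ℕ) :
    0 < qs E.a E.e n ∧ qs E.a E.e n ≤ qs E.a E.e (n + 1) := by
  induction n with
  | zero =>
    have h := E.ha 1 le_rfl
    constructor
    · simp [qs]
    · simp only [qs]
      omega
  | succ n ih =>
    obtain ⟨h1, h2⟩ := ih
    have h := E.ha (n + 2) (by omega)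
    refine ⟨by omega, ?_⟩
    simp only [qs]
    rcases E.he (n + 2) with h3 | h3 <;> rw [h3] <;> nlinarith

lemma qs_pos (E : ANIE α) (n : ℕ) : (0 : ℝ) < (qs E.a E.e n : ℝ) := by
  exact_mod_cast (E.qs_pos_mono n).1

lemma abar_zero (E : ANIE α) : E.abar 0 = 0 := by simp [abar, ab]

lemma abar_succ (E : ANIE α) (n : ℕ) :
    E.abar (n + 1) = (qs E.a E.e n : ℝ) / (qs E.a E.e (n + 1) : ℝ) := by
  simp [abar, ab]

lemma abar_pos (E : ANIE α) (n : ℕ) : 0 < E.abar (n + 1) := by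
  rw [abar_succ]
  exact div_pos (E.qs_pos _) (E.qs_pos _)

lemma abar_nonneg (E : ANIE α) (n : ℕ) : 0 ≤ E.abar n := by
  cases n with
  | zero => rw [abar_zero]
  | succ n => exact (E.abar_pos n).le

lemma abar_le_one (E : ANIE α) (n : ℕ) : E.abar n ≤ 1 := by
  cases n with
  | zero => rw [abar_zero]; norm_num
  | succ n =>
    rw [abar_succ, div_le_one (E.qs_pos _)]
    exact_mod_cast (E.qs_pos_mono n).2

lemma abar_rec (E : ANIE α) (n : ℕ) :
    E.abar (n + 1) * ((E.a (n + 1) : ℝ) + (E.e (n + 1) : ℝ) * E.abar n) = 1 := by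
  cases n with
  | zero =>
    have h := E.qs_pos 1
    rw [abar_zero, abar_succ]
    simp only [qs, zero_add] at h ⊢
    push_cast
    field_simp
    ring
  | succ n =>
    have h1 := E.qs_pos n
    have h2 := E.qs_pos (n + 1)
    have h3 := E.qs_pos (n + 2)
    rw [abar_succ, abar_succ, div_mul_eq_mul_div, div_eq_one_iff_eq h3.ne']
    simp only [qs]
    push_cast
    field_simp

lemma e_real (E : ANIE α) (n : ℕ) : (E.e n : ℝ) = 1 ∨ (E.e n : ℝ) = -1 := by
  rcases E.he n with h | h <;> simp [h]

lemma a_real (E : ANIE α) (n : ℕ) : (2 : ℝ) ≤ (E.a (n + 1) : ℝ) := by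
  exact_mod_cast E.ha (n + 1) (by omega)

lemma t_rec (E : ANIE α) (n : ℕ) :
    E.t n * ((E.a (n + 1) : ℝ) + (E.e (n + 2) : ℝ) * E.t (n + 1)) = 1 := by
  have h1 := E.hrec n
  have h2 := E.htpos n
  have h3 : (E.a (n + 1) : ℝ) + (E.e (n + 2) : ℝ) * E.t (n + 1) ≠ 0 := by
    intro h
    rw [h] at h1
    simp at h1
    linarith
  rw [h1]
  field_simp

/-- `a = 2`, or `a ≥ 3`. -/
lemma a_cases (E : ANIE α) (n : ℕ) : E.a (n + 1) = 2 ∨ (3 : ℝ) ≤ (E.a (n + 1) : ℝ) := by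
  have h := E.ha (n + 1) (by omega)
  rcases eq_or_lt_of_le h with h | h
  · exact Or.inl h.symm
  · right
    have : (3 : ℤ) ≤ E.a (n + 1) := by omega
    exact_mod_cast this

lemma t_half (E : ANIE α) (n : ℕ) (h : E.e (n + 1) = -1) : E.t n ≤ 1 / 2 := by
  have h1 := E.t_rec n
  have h2 := E.htpos n
  have h3 := E.htpos (n + 1)
  have h4 := E.htlt1 (n + 1)
  rcases E.a_cases n with ha | ha
  · rcases E.hcond1 (n + 1) (by omega) ha with h5 | h5
    · omega
    · rw [show n + 1 + 1 = n + 2 from rfl] at h5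
      rw [ha, h5] at h1
      push_cast at h1
      nlinarith
  · rcases E.e_real (n + 2) with h5 | h5 <;> rw [h5] at h1 <;> nlinarith

lemma t_two_thirds (E : ANIE α) (n : ℕ) : E.t n ≤ 2 / 3 := by
  have h1 := E.t_rec n
  have h2 := E.htpos n
  have h3 := E.htpos (n + 1)
  have ha := E.a_real n
  rcases E.he (n + 2) with h5 | h5
  · rw [h5] at h1
    push_cast at h1
    nlinarith [mul_pos h2 h3]
  · have h6 := E.t_half (n + 1) h5
    rw [h5] at h1
    push_cast at h1
    nlinarith

lemma t_two_fifths (E : ANIE α) (n : ℕ) (ha : (3 : ℝ) ≤ (E.a (n + 1) : ℝ)) :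
    E.t n ≤ 2 / 5 := by
  have h1 := E.t_rec n
  have h2 := E.htpos n
  have h3 := E.htpos (n + 1)
  rcases E.he (n + 2) with h5 | h5
  · rw [h5] at h1
    push_cast at h1
    nlinarith [mul_pos h2 h3]
  · have h6 := E.t_half (n + 1) h5
    rw [h5] at h1
    push_cast at h1
    nlinarith

/-- Consequence of condition (ii). -/
lemma cond2 (E : ANIE α) (n : ℕ) (ha : E.a (n + 1) = 2) (h : E.e (n + 1) = -1) :
    0 < E.abar n ∧ 1 + 1 / E.t (n + 1) ≤ 1 / E.abar n := by
  have h1 := E.hcond2 (n + 1) (by omega) ha h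
  cases n with
  | zero =>
    have := E.he1
    simp only [zero_add] at h
    omega
  | succ n =>
    refine ⟨E.abar_pos n, ?_⟩
    simp only [Nat.add_sub_cancel] at h1
    unfold abar
    linarith

lemma abar_le (E : ANIE α) (n : ℕ) : E.abar n ≤ 5 / 8 := by
  cases n with
  | zero => rw [abar_zero]; norm_num
  | succ n =>
    have h1 := E.abar_rec n
    have h2 := E.abar_pos n
    have h3 := E.abar_nonneg n
    have h4 := E.abar_le_one n
    have h5 := E.a_real n
    rcases E.he (n + 1) with h | h
    · rw [h] at h1
      push_cast at h1
      nlinarith [mul_nonneg h2.le h3]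
    · rcases E.a_cases n with ha | ha
      · obtain ⟨h6, h7⟩ := E.cond2 n ha h
        have h8 := E.t_two_thirds (n + 1)
        have h9 : (3 : ℝ) / 2 ≤ 1 / E.t (n + 1) := by
          rw [le_div_iff₀ (E.htpos _)]
          linarith
        have h10 : (5 : ℝ) / 2 ≤ 1 / E.abar n := by linarith
        rw [le_div_iff₀ h6] at h10
        rw [h, ha] at h1
        push_cast at h1
        nlinarith
      · rw [h] at h1
        push_cast at h1
        nlinarith

/-- Bound for `α_i` when `ε_{i+1} a_{i+1} ≠ 2` and `ε_{i+1} = 1`. -/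
lemma t_main (E : ANIE α) (n : ℕ) (ha : (3 : ℝ) ≤ (E.a (n + 1) : ℝ))
    (he : E.e (n + 1) = 1) : E.t n ≤ 7 / 18 := by
  have h1 := E.t_rec n
  have h2 := E.htpos n
  have h3 := E.htpos (n + 1)
  rcases E.he (n + 2) with h5 | h5
  · rw [h5] at h1
    push_cast at h1
    nlinarith [mul_pos h2 h3]
  · have hh := E.t_half (n + 1) h5
    rcases eq_or_lt_of_le ha with h3a | h4a
    · have h6 : E.t (n + 1) ≤ 3 / 7 := by
        rcases E.a_cases (n + 1) with ha' | ha'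
        · obtain ⟨h7, h8⟩ := E.cond2 (n + 1) ha' h5
          have h9 := E.abar_rec n
          rw [he, ← h3a] at h9
          push_cast at h9
          have h10 : 1 / E.abar (n + 1) = 3 + 1 * E.abar n := by
            rw [div_eq_iff h7.ne']
            linarith
          have h11 := E.abar_le_one n
          have h12 : 1 / E.t (n + 1 + 1) ≤ 3 := by linarith
          have h13 := E.htpos (n + 1 + 1)
          rw [div_le_iff₀ h13] at h12
          have h14 := E.t_rec (n + 1)
          have h15 : E.e (n + 1 + 2) = 1 := by
            rcases E.hcond1 (n + 1 + 1) (by omega) ha' with h | h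
            · rw [show n + 1 + 1 = n + 2 from rfl] at h
              omega
            · exact h
          rw [h15, ha'] at h14
          push_cast at h14
          rw [show n + 1 + 1 = n + 2 from rfl] at *
          nlinarith
        · have := E.t_two_fifths (n + 1) ha'
          linarith
      rw [h5, ← h3a] at h1
      push_cast at h1
      nlinarith
    · have h4 : (4 : ℝ) ≤ (E.a (n + 1) : ℝ) := by
        have : (3 : ℤ) < E.a (n + 1) := by exact_mod_cast h4a
        have : (4 : ℤ) ≤ E.a (n + 1) := by omega
        exact_mod_cast this
      rw [h5] at h1
      push_cast at h1
      nlinarith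

/-- The sign of the last non-zero `λ`. -/
noncomputable def sg (E : ANIE α) (n : ℕ) : ℝ := (-1) ^ E.oddIdx n

lemma sg_cases (E : ANIE α) (n : ℕ) : E.sg n = 1 ∨ E.sg n = -1 := neg_one_pow_eq_or ℝ _

lemma lam_cases (E : ANIE α) (n : ℕ) :
    (Odd (E.a (n + 1)) ∧ (E.lam (n + 1) : ℝ) = -E.sg n ∧ E.sg (n + 1) = -E.sg n) ∨
    (Even (E.a (n + 1)) ∧ (E.lam (n + 1) : ℝ) = 0 ∧ E.sg (n + 1) = E.sg n) := by
  have hI : Finset.Icc 1 (n + 1) = insert (n + 1) (Finset.Icc 1 n) := by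
    ext k
    simp only [Finset.mem_Icc, Finset.mem_insert]
    omega
  by_cases h : Odd (E.a (n + 1))
  · left
    have h1 : E.oddIdx (n + 1) = E.oddIdx n + 1 := by
      unfold oddIdx
      rw [hI, Finset.filter_insert, if_pos h, Finset.card_insert_of_notMem]
      simp
    refine ⟨h, ?_, ?_⟩
    · simp only [lam, if_pos h, h1, sg, pow_succ]
      push_cast
      ring
    · simp only [h1, sg, pow_succ]
      ring
  · right
    have h1 : E.oddIdx (n + 1) = E.oddIdx n := by
      unfold oddIdx
      rw [hI, Finset.filter_insert, if_neg h]
    refine ⟨Int.not_odd_iff_even.mp h, ?_, ?_⟩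
    · simp [lam, if_neg h]
    · simp only [h1, sg]

lemma delta_ne (E : ANIE α) (n : ℕ) : (E.delta n : ℝ) ≠ 0 := by
  unfold delta
  rw [Int.cast_ne_zero, neg_ne_zero, Finset.prod_ne_zero_iff]
  intro j _
  rcases E.he j with h | h <;> rw [h] <;> norm_num

lemma delta_succ (E : ANIE α) (n : ℕ) :
    (E.delta (n + 1) : ℝ) = (E.delta n : ℝ) * (-(E.e (n + 2) : ℝ)) := by
  unfold delta
  rw [Finset.prod_Icc_succ_top (by omega)]
  push_cast
  ring

lemma dminus_zero (E : ANIE α) : E.dminus 0 = 0 := by simp [dminus]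

lemma dminus_succ (E : ANIE α) (n : ℕ) :
    E.dminus (n + 1) =
      E.abar (n + 1) * ((E.lam (n + 1) : ℝ) - (E.e (n + 1) : ℝ) * E.dminus n) := by
  cases n with
  | zero =>
    have h1 := E.qs_pos 1
    have h2 := E.delta_ne 0
    rw [dminus_zero, abar_succ]
    simp only [dminus, zero_add, Finset.Icc_self, Finset.sum_singleton, Nat.sub_self]
    field_simp
    ring
  | succ n =>
    have h1 := E.qs_pos (n + 1)
    have h2 := E.qs_pos (n + 2)
    have h3 := E.delta_ne n
    have h4 := E.delta_ne (n + 1)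
    have h5 := E.delta_succ n
    rw [abar_succ]
    simp only [dminus]
    rw [Finset.sum_Icc_succ_top (by omega : 1 ≤ n + 1 + 1)]
    simp only [Nat.add_sub_cancel]
    generalize (∑ i ∈ Finset.Icc 1 (n + 1),
      (E.lam i : ℝ) * (E.delta (i - 1) : ℝ) * (qs E.a E.e (i - 1) : ℝ)) = P
    rw [show n + 1 + 1 = n + 2 from rfl]
    rcases E.e_real (n + 2) with h | h <;> rw [h] at h5 ⊢ <;> rw [h5] <;> field_simp <;> ring

/-- Normalised `d_n^-`. -/
noncomputable def yy (E : ANIE α) (n : ℕ) : ℝ := E.sg n * E.dminus n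

lemma yy_cases (E : ANIE α) (n : ℕ) :
    (Odd (E.a (n + 1)) ∧ E.yy (n + 1) = E.abar (n + 1) * (1 + (E.e (n + 1) : ℝ) * E.yy n)) ∨
    (Even (E.a (n + 1)) ∧ E.yy (n + 1) = -(E.abar (n + 1) * ((E.e (n + 1) : ℝ) * E.yy n))) := by
  rcases E.lam_cases n with ⟨h1, h2, h3⟩ | ⟨h1, h2, h3⟩
  · left
    refine ⟨h1, ?_⟩
    unfold yy
    rw [dminus_succ, h2, h3]
    rcases E.sg_cases n with h | h <;> rw [h] <;> ring
  · right
    refine ⟨h1, ?_⟩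
    unfold yy
    rw [dminus_succ, h2, h3]
    ring

lemma yy_bound (E : ANIE α) (n : ℕ) :
    -(3 / 10) ≤ E.yy n ∧ E.yy n ≤ 284 / 1000 + 72 / 100 * E.abar n := by
  induction n with
  | zero => simp [yy, dminus_zero, abar_zero]; norm_num
  | succ n ih =>
    obtain ⟨l, u⟩ := ih
    have b0 := E.abar_nonneg n
    have b1 := E.abar_le n
    have c0 := E.abar_pos n
    have c1 := E.abar_le (n + 1)
    have hr := E.abar_rec n
    have ha := E.a_real n
    have hyc := E.yy_cases n
    generalize E.abar (n + 1) = c at *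
    generalize hb : E.abar n = b at *
    generalize E.yy n = y at *
    rcases hyc with ⟨ho, h⟩ | ⟨ho, h⟩
    · have ha3 : (3 : ℝ) ≤ (E.a (n + 1) : ℝ) := by
        rcases E.a_cases n with h2 | h2
        · rw [h2] at ho
          exact absurd ho (by decide)
        · exact h2
      have hca : 0 ≤ c * ((E.a (n + 1) : ℝ) - 3) := mul_nonneg c0.le (by linarith)
      rw [h]
      rcases E.e_real (n + 1) with he | he <;> rw [he] at hr ⊢
      · have k : 0 ≤ c * (572 / 1000 + 284 / 1000 * b - y) := mul_nonneg c0.le (by linarith)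
        have k2 : 0 ≤ c * (1 + 1 * y) := mul_nonneg c0.le (by linarith)
        constructor <;> linarith
      · have k : 0 ≤ c * (572 / 1000 - 284 / 1000 * b + y) := mul_nonneg c0.le (by linarith)
        have k2 : 0 ≤ c * (1 + -1 * y) := mul_nonneg c0.le (by linarith)
        constructor <;> linarith
    · have hca : 0 ≤ c * ((E.a (n + 1) : ℝ) - 2) := mul_nonneg c0.le (by linarith)
      rw [h]
      rcases E.e_real (n + 1) with he | he <;> rw [he] at hr ⊢
      · have k : 0 ≤ c * (6 / 10 + 3 / 10 * b - y) := mul_nonneg c0.le (by linarith)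
        have k2 : 0 ≤ c * (y + 3 / 10) := mul_nonneg c0.le (by linarith)
        constructor <;> linarith
      · have k : 0 ≤ c * (1 - y) := mul_nonneg c0.le (by linarith)
        have k2 : 0 ≤ c * (y + 3 / 10) := mul_nonneg c0.le (by linarith)
        constructor <;> linarith

lemma D_pos (E : ANIE α) (n : ℕ) : 0 < E.D n := Finset.prod_pos fun j _ => E.htpos j

lemma D_succ (E : ANIE α) (n : ℕ) : E.D (n + 1) = E.D n * E.t n := by
  simp [D, Finset.prod_range_succ]

lemma D_anti (E : ANIE α) (n : ℕ) : E.D (n + 1) ≤ E.D n := by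
  rw [D_succ]
  nlinarith [E.D_pos n, E.htlt1 n]

lemma partial_bound (E : ANIE α) (K : ℕ) : ∀ n : ℕ,
    0 ≤ -E.sg n * ∑ k ∈ Finset.range K, (E.lam (n + 1 + k) : ℝ) * E.D (n + 1 + k) ∧
    -E.sg n * ∑ k ∈ Finset.range K, (E.lam (n + 1 + k) : ℝ) * E.D (n + 1 + k) ≤ E.D (n + 1) := by
  induction K with
  | zero =>
    intro n
    simp [(E.D_pos (n + 1)).le]
  | succ K ih =>
    intro n
    obtain ⟨h1, h2⟩ := ih (n + 1)
    have h3 := E.D_anti (n + 1)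
    have h4 := E.D_pos (n + 1)
    rw [Finset.sum_range_succ']
    have hs : ∑ k ∈ Finset.range K, (E.lam (n + 1 + (k + 1)) : ℝ) * E.D (n + 1 + (k + 1)) =
        ∑ k ∈ Finset.range K, (E.lam (n + 1 + 1 + k) : ℝ) * E.D (n + 1 + 1 + k) := by
      apply Finset.sum_congr rfl
      intro k _
      rw [show n + 1 + (k + 1) = n + 1 + 1 + k by ring]
    rw [hs]
    generalize ∑ k ∈ Finset.range K, (E.lam (n + 1 + 1 + k) : ℝ) * E.D (n + 1 + 1 + k) = P at *
    simp only [add_zero]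
    rcases E.lam_cases n with ⟨-, hl, hsg⟩ | ⟨-, hl, hsg⟩
    · rw [hsg] at h1 h2
      rw [hl]
      rcases E.sg_cases n with h | h <;> rw [h] at h1 h2 ⊢ <;> constructor <;> linarith
    · rw [hsg] at h1 h2
      rw [hl]
      constructor <;> linarith

lemma dplus_bound (E : ANIE α) (n : ℕ) :
    0 ≤ -E.sg n * E.dplus n ∧ -E.sg n * E.dplus n ≤ E.t n := by
  have hD := E.D_pos n
  have key : 0 ≤ -E.sg n * ∑' k : ℕ, (E.lam (n + 1 + k) : ℝ) * E.D (n + 1 + k) ∧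
      -E.sg n * ∑' k : ℕ, (E.lam (n + 1 + k) : ℝ) * E.D (n + 1 + k) ≤ E.D (n + 1) := by
    by_cases hS : Summable fun k : ℕ => (E.lam (n + 1 + k) : ℝ) * E.D (n + 1 + k)
    · have hT := (hS.hasSum.tendsto_sum_nat).const_mul (-E.sg n)
      exact ⟨ge_of_tendsto' hT fun K => (E.partial_bound K n).1,
        le_of_tendsto' hT fun K => (E.partial_bound K n).2⟩
    · rw [tsum_eq_zero_of_not_summable hS]
      simp [(E.D_pos (n + 1)).le]
  rw [D_succ] at key
  unfold dplus
  rw [← mul_div_assoc]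
  constructor
  · exact div_nonneg key.1 hD.le
  · rw [div_le_iff₀ hD]
    linarith [key.2]

end ANIE

/-- Lemma 6: for an adjusted nearest integer expansion, if not (`a_{i+1} = 2` with
`ε_{i+1} = +1`), then `s_2(i), s_4(i) ≥ 2057/51728 = 1/25.147…` for `γ_*`. -/
theorem stmt13 (α : ℝ) (hirr : Irrational α) (h0 : 0 < α) (h12 : α < 1 / 2)
    (E : ANIE α) (i : ℕ) (hi : 1 ≤ i)
    (h : ¬(E.a (i + 1) = 2 ∧ E.e (i + 1) = 1))
    (σ : ℝ) (hσ : σ = 1 ∨ σ = -1) :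
    1 / 4 * (1 + E.abar i - σ * E.dminus i) *
        ((1 - (E.e (i + 1) : ℝ) * E.t i + σ * E.dplus i) /
          (1 + (E.e (i + 1) : ℝ) * E.abar i * E.t i)) ≥ 2057 / 51728 := by
  have b0 := E.abar_nonneg i
  have b1 := E.abar_le i
  have t0 := E.htpos i
  obtain ⟨yl, yu⟩ := E.yy_bound i
  obtain ⟨xl, xu⟩ := E.dplus_bound i
  have hy : E.dminus i = E.sg i * E.yy i := by
    unfold ANIE.yy
    rcases E.sg_cases i with h | h <;> rw [h] <;> ring
  have hx : E.dplus i = -E.sg i * (-E.sg i * E.dplus i) := by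
    rcases E.sg_cases i with h | h <;> rw [h] <;> ring
  rw [hx, hy]
  generalize -E.sg i * E.dplus i = x at *
  generalize E.yy i = y at *
  have hτ : σ * E.sg i = 1 ∨ σ * E.sg i = -1 := by
    rcases E.sg_cases i with h | h <;> rcases hσ with h' | h' <;> rw [h, h'] <;> norm_num
  rw [show 1 + E.abar i - σ * (E.sg i * y) = 1 + E.abar i - (σ * E.sg i) * y by ring,
    show σ * (-E.sg i * x) = -(σ * E.sg i) * x by ring]
  generalize σ * E.sg i = τ at *
  generalize hb : E.abar i = b at *
  rcases E.he (i + 1) with he | he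
  · have ha : (3 : ℝ) ≤ (E.a (i + 1) : ℝ) := by
      rcases E.a_cases i with h2 | h2
      · exact absurd ⟨h2, he⟩ h
      · exact h2
    have t1 := E.t_main i ha he
    rw [he]
    push_cast
    generalize E.t i = t at *
    have hd : 0 < 1 + 1 * b * t := by positivity
    have hd2 : 1 + 1 * b * t ≤ 1 + 7 / 18 * b := by nlinarith
    rw [← mul_div_assoc, ge_iff_le, le_div_iff₀ hd]
    rcases hτ with hτ | hτ <;> rw [hτ]
    · have k1 : 716 / 1000 + 28 / 100 * b ≤ 1 + b - 1 * y := by linarith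
      have k2 : 2 / 9 ≤ 1 - 1 * t + -1 * x := by linarith
      nlinarith [mul_le_mul k1 k2 (by norm_num) (by linarith)]
    · have k1 : 7 / 10 + b ≤ 1 + b - -1 * y := by linarith
      have k2 : 11 / 18 ≤ 1 - 1 * t + - -1 * x := by linarith
      nlinarith [mul_le_mul k1 k2 (by norm_num) (by linarith)]
  · have t1 := E.t_half i he
    rw [he]
    push_cast
    generalize E.t i = t at *
    have hbt : b * t ≤ 5 / 8 * (1 / 2) := mul_le_mul b1 t1 t0.le (by norm_num)
    have hbt0 : 0 ≤ b * t := by positivity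
    have hd : 0 < 1 + -1 * b * t := by linarith
    rw [← mul_div_assoc, ge_iff_le, le_div_iff₀ hd]
    rcases hτ with hτ | hτ <;> rw [hτ]
    · have k1 : 716 / 1000 ≤ 1 + b - 1 * y := by linarith
      have k2 : 1 ≤ 1 - -1 * t + -1 * x := by linarith
      nlinarith [mul_le_mul k1 k2 (by norm_num) (by linarith)]
    · have k1 : 7 / 10 ≤ 1 + b - -1 * y := by linarith
      have k2 : 1 ≤ 1 - -1 * t + - -1 * x := by linarith
      nlinarith [mul_le_mul k1 k2 (by norm_num) (by linarith)]
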